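/- Let W be the space of all real 8×8 matrices X such that X_{is}Φ_{sjkl} + X_{js}Φ_{iskl} + X_{ks}Φ_{ijsl} + X_{ls}Φ_{ijks} = 0 for all i,j,k,l ∈ {0,…,7} (the infinitesimal stabilizer of Φ under the standard action of gl(8,ℝ)). Then every X ∈ W is antisymmetric, and dim W = 21 (W is the Lie algebra spin(7) inside so(8)). -/

import Mathlib

/-!
We work in ℝ⁸ with the standard basis `e₀, …, e₇`.  A `k`-form is a totally antisymmetric
map `(Fin 8)^k → ℝ`; repeated indices are summed over `Fin 8` and `kd` is the Kronecker
delta.  `Phi` is the fundamental 4-form of the standard `Spin(7)`-structure on ℝ⁸,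
`Φ = -e₀₁₂₇ + e₀₂₃₆ - e₀₃₄₇ - e₀₅₆₇ + e₀₁₄₆ + e₀₂₄₅ - e₀₁₃₅
     - e₃₄₅₆ - e₁₄₅₇ - e₁₂₅₆ - e₁₂₃₄ - e₂₃₅₇ - e₁₃₆₇ + e₂₄₆₇`.
-/

noncomputable section

/-- Kronecker delta on `Fin 8`. -/
def kd (a b : Fin 8) : ℝ := if a = b then 1 else 0

/-- Component at the indices `(i,j,k,l)` of the wedge product `e_a ∧ e_b ∧ e_c ∧ e_d`
of standard coordinate 1-forms, normalized so that `(e_a ∧ e_b ∧ e_c ∧ e_d)_{abcd} = 1`;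
it is the alternating sum of products of Kronecker deltas. -/
def wedge4 (a b c d i j k l : Fin 8) : ℝ :=
  Matrix.det !![kd a i, kd a j, kd a k, kd a l;
                kd b i, kd b j, kd b k, kd b l;
                kd c i, kd c j, kd c k, kd c l;
                kd d i, kd d j, kd d k, kd d l]

/-- The fundamental 4-form `Φ` of the standard `Spin(7)`-structure on `ℝ⁸`, in components:
the totally antisymmetric 4-tensor with `Φ_{0127} = -1`, `Φ_{0236} = 1`, `Φ_{0347} = -1`,
`Φ_{0567} = -1`, `Φ_{0146} = 1`, `Φ_{0245} = 1`, `Φ_{0135} = -1`, `Φ_{3456} = -1`,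
`Φ_{1457} = -1`, `Φ_{1256} = -1`, `Φ_{1234} = -1`, `Φ_{2357} = -1`, `Φ_{1367} = -1`,
`Φ_{2467} = 1`, all components not obtained from these by permutation being zero. -/
def Phi (i j k l : Fin 8) : ℝ :=
    -wedge4 0 1 2 7 i j k l + wedge4 0 2 3 6 i j k l - wedge4 0 3 4 7 i j k l
  - wedge4 0 5 6 7 i j k l + wedge4 0 1 4 6 i j k l + wedge4 0 2 4 5 i j k l
  - wedge4 0 1 3 5 i j k l - wedge4 3 4 5 6 i j k l - wedge4 1 4 5 7 i j k l
  - wedge4 1 2 5 6 i j k l - wedge4 1 2 3 4 i j k l - wedge4 2 3 5 7 i j k l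
  - wedge4 1 3 6 7 i j k l + wedge4 2 4 6 7 i j k l

/-- The infinitesimal action of `gl(8,ℝ)` on `Φ`:
`(X·Φ)_{ijkl} = X_{is}Φ_{sjkl} + X_{js}Φ_{iskl} + X_{ks}Φ_{ijsl} + X_{ls}Φ_{ijks}`. -/
def actPhi : Matrix (Fin 8) (Fin 8) ℝ →ₗ[ℝ] (Fin 8 → Fin 8 → Fin 8 → Fin 8 → ℝ) where
  toFun X := fun i j k l =>
    ∑ s, (X i s * Phi s j k l + X j s * Phi i s k l + X k s * Phi i j s l + X l s * Phi i j k s)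
  map_add' X Y := by
    funext i j k l
    simp only [Matrix.add_apply, Pi.add_apply, add_mul, Finset.sum_add_distrib]
    ring
  map_smul' c X := by
    funext i j k l
    simp only [Matrix.smul_apply, Pi.smul_apply, smul_eq_mul, RingHom.id_apply,
      Finset.mul_sum, mul_assoc, mul_add]

/-- `W = spin(7)`: the infinitesimal stabilizer of `Φ` in `gl(8,ℝ)`, i.e. all real 8×8
matrices `X` with `X_{is}Φ_{sjkl} + X_{js}Φ_{iskl} + X_{ks}Φ_{ijsl} + X_{ls}Φ_{ijks} = 0`. -/
def Wstab : Submodule ℝ (Matrix (Fin 8) (Fin 8) ℝ) := LinearMap.ker actPhi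

set_option exponentiation.threshold 4000

/-- Packed table of the triple cross product: the 5-bit digit number `64 j + 8 k + l` holds the
unique index `s` with `Φ_(s j k l) ≠ 0` (low three bits) and the sign of that component
(next two bits: `0` for a vanishing component, `1` for plus, `2` for minus). -/
def crossTable : ℕ :=
  103087209743093997276896687074427783953319062919181354874963115828568697855619045273194231483858076210329804202332937948740646999587147739211609304289776760413911561442334364546955340286950136263596310949919887367328627284221999351536037849678906991386819892552996132723584072459104060895108716625559616974769794247632280450645832248424086015814740743674123014739536818790052857433778461801860103193069092860272536382159081315700167928524769144825223414413286752922456229265766563020556788282133034357112889150773883099736090894701829895602747961397575876718508561637964858131740790962742149293173840495964938576024750943793184113565043232631774421503640181346251453405726091038898028879118061275086086723399756423623214292400511639380512444693040271982592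

/-- The digit of `crossTable` belonging to `(j, k, l)`. -/
def crossCode (j k l : Fin 8) : ℕ :=
  crossTable / 2 ^ (5 * (64 * j.val + 8 * k.val + l.val)) % 32

/-- The index of the cross product of three basis vectors. -/
def cp (j k l : Fin 8) : Fin 8 :=
  ⟨crossCode j k l % 8, Nat.mod_lt _ (by norm_num)⟩

/-- `signed c x` is `0`, `x` or `-x`, according to the sign code `c`. -/
def signed {R : Type} [Ring R] (c : ℕ) (x : R) : R :=
  match c with
  | 0 => 0
  | 1 => x
  | _ => -x

/-- The signed entry of a row at the cross product index. -/
def sterm {R : Type} [Ring R] (v : Fin 8 → R) (j k l : Fin 8) : R :=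
  signed (crossCode j k l / 8) (v (cp j k l))

/-- The infinitesimal action in terms of the cross product. -/
def act {R : Type} [Ring R] (X : Fin 8 → Fin 8 → R) (i j k l : Fin 8) : R :=
  sterm (X i) j k l - sterm (X j) i k l + sterm (X k) i j l - sterm (X l) i j k

/-- `2 × 2` alternating symbol, lazily evaluated. -/
def w2 (c d k l : Fin 8) : ℤ :=
  if c = k then (if d = l then 1 else 0) - (if c = l then (if d = k then 1 else 0) else 0)
  else if c = l then (if d = k then -1 else 0) else 0

/-- `3 × 3` alternating symbol, lazily evaluated. -/
def w3 (b c d j k l : Fin 8) : ℤ :=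
  (if b = j then w2 c d k l else 0) - (if b = k then w2 c d j l else 0)
    + (if b = l then w2 c d j k else 0)

/-- `4 × 4` alternating symbol, lazily evaluated. -/
def w4 (a b c d i j k l : Fin 8) : ℤ :=
  (if a = i then w3 b c d j k l else 0) - (if a = j then w3 b c d i k l else 0)
    + (if a = k then w3 b c d i j l else 0) - (if a = l then w3 b c d i j k else 0)

theorem w2_cast (c d k l : Fin 8) :
    (w2 c d k l : ℝ) = kd c k * kd d l - kd c l * kd d k := by
  unfold w2 kd
  split_ifs <;> simp

theorem w3_cast (b c d j k l : Fin 8) :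
    (w3 b c d j k l : ℝ) = kd b j * (w2 c d k l : ℝ) - kd b k * (w2 c d j l : ℝ)
      + kd b l * (w2 c d j k : ℝ) := by
  unfold w3 kd
  split_ifs <;> simp

theorem w4_cast (a b c d i j k l : Fin 8) :
    (w4 a b c d i j k l : ℝ) = kd a i * (w3 b c d j k l : ℝ) - kd a j * (w3 b c d i k l : ℝ)
      + kd a k * (w3 b c d i j l : ℝ) - kd a l * (w3 b c d i j k : ℝ) := by
  unfold w4 kd
  split_ifs <;> simp

theorem wedge4_eq (a b c d i j k l : Fin 8) :
    wedge4 a b c d i j k l = (w4 a b c d i j k l : ℝ) := by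
  rw [w4_cast]
  simp only [w3_cast, w2_cast]
  simp [wedge4, Matrix.det_succ_row_zero, Fin.sum_univ_succ, Fin.succAbove]
  ring

/-- Integer version of `Phi`. -/
def PhiZ (i j k l : Fin 8) : ℤ :=
    -w4 0 1 2 7 i j k l + w4 0 2 3 6 i j k l - w4 0 3 4 7 i j k l
  - w4 0 5 6 7 i j k l + w4 0 1 4 6 i j k l + w4 0 2 4 5 i j k l
  - w4 0 1 3 5 i j k l - w4 3 4 5 6 i j k l - w4 1 4 5 7 i j k l
  - w4 1 2 5 6 i j k l - w4 1 2 3 4 i j k l - w4 2 3 5 7 i j k l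
  - w4 1 3 6 7 i j k l + w4 2 4 6 7 i j k l

theorem Phi_eq (i j k l : Fin 8) : Phi i j k l = (PhiZ i j k l : ℝ) := by
  simp only [Phi, PhiZ, wedge4_eq]
  push_cast
  ring

set_option maxRecDepth 100000 in
theorem PhiZ_table : ∀ i j k l : Fin 8,
    PhiZ i j k l = if i = cp j k l then signed (crossCode j k l / 8) 1 else 0 := by
  decide +kernel

set_option maxRecDepth 100000 in
theorem PhiZ_swap : ∀ i j k l : Fin 8, PhiZ i j k l = -PhiZ j i k l ∧
    PhiZ i j k l = -PhiZ i k j l ∧ PhiZ i j k l = -PhiZ i j l k := by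
  decide +kernel

theorem signed_cast (c : ℕ) (x : ℝ) : x * ((signed c (1 : ℤ) : ℤ) : ℝ) = signed c x := by
  unfold signed
  split <;> simp

theorem sum_Phi (v : Fin 8 → ℝ) (j k l : Fin 8) :
    ∑ s, v s * Phi s j k l = sterm v j k l := by
  simp only [Phi_eq, PhiZ_table, Int.cast_ite, Int.cast_zero, mul_ite, mul_zero,
    Finset.sum_ite_eq', Finset.mem_univ, if_true, signed_cast, sterm]

theorem Phi_swap12 (i j k l : Fin 8) : Phi i j k l = -Phi j i k l := by
  rw [Phi_eq, Phi_eq, (PhiZ_swap i j k l).1]; push_cast; rfl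

theorem Phi_swap23 (i j k l : Fin 8) : Phi i j k l = -Phi i k j l := by
  rw [Phi_eq, Phi_eq, (PhiZ_swap i j k l).2.1]; push_cast; rfl

theorem Phi_swap34 (i j k l : Fin 8) : Phi i j k l = -Phi i j l k := by
  rw [Phi_eq, Phi_eq, (PhiZ_swap i j k l).2.2]; push_cast; rfl

theorem actPhi_eq (X : Matrix (Fin 8) (Fin 8) ℝ) (i j k l : Fin 8) :
    actPhi X i j k l = act X i j k l := by
  have h2 : ∀ s, Phi i s k l = -Phi s i k l := fun s => Phi_swap12 _ _ _ _
  have h3 : ∀ s, Phi i j s l = Phi s i j l := fun s => by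
    rw [Phi_swap23, Phi_swap12, neg_neg]
  have h4 : ∀ s, Phi i j k s = -Phi s i j k := fun s => by
    rw [Phi_swap34, Phi_swap23, Phi_swap12, neg_neg]
  change ∑ s, (X i s * Phi s j k l + X j s * Phi i s k l + X k s * Phi i j s l
    + X l s * Phi i j k s) = _
  simp only [h2, h3, h4, Finset.sum_add_distrib, mul_neg, Finset.sum_neg_distrib, sum_Phi, act]
  ring

theorem mem_Wstab (X : Matrix (Fin 8) (Fin 8) ℝ) :
    X ∈ Wstab ↔ ∀ i j k l, act X i j k l = 0 := by
  rw [Wstab, LinearMap.mem_ker]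
  constructor
  · intro h i j k l
    rw [← actPhi_eq, h]; rfl
  · intro h
    funext i j k l
    rw [actPhi_eq, h]; rfl

/-- A function of four indices that changes sign under adjacent swaps vanishes as soon as it
vanishes on strictly increasing indices. -/
theorem alt_zero (f : Fin 8 → Fin 8 → Fin 8 → Fin 8 → ℝ)
    (h12 : ∀ i j k l, f i j k l = -f j i k l) (h23 : ∀ i j k l, f i j k l = -f i k j l)
    (h34 : ∀ i j k l, f i j k l = -f i j l k)
    (h : ∀ i j k l, i < j → j < k → k < l → f i j k l = 0) (i j k l : Fin 8) :
    f i j k l = 0 := by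
  have z12 : ∀ i k l, f i i k l = 0 := fun i k l => by linarith [h12 i i k l]
  have z23 : ∀ i j l, f i j j l = 0 := fun i j l => by linarith [h23 i j j l]
  have z34 : ∀ i j k, f i j k k = 0 := fun i j k => by linarith [h34 i j k k]
  have s1 : ∀ i j k l, j < k → k < l → f i j k l = 0 := by
    intro i j k l hjk hkl
    rcases lt_trichotomy i j with hij | rfl | hij
    · exact h i j k l hij hjk hkl
    · exact z12 _ _ _
    rw [h12, neg_eq_zero]
    rcases lt_trichotomy i k with hik | rfl | hik
    · exact h j i k l hij hik hkl
    · exact z23 _ _ _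
    rw [h23, neg_eq_zero]
    rcases lt_trichotomy i l with hil | rfl | hil
    · exact h j k i l hjk hik hil
    · exact z34 _ _ _
    rw [h34, neg_eq_zero]
    exact h j k l i hjk hkl hil
  have s2 : ∀ i j k l, k < l → f i j k l = 0 := by
    intro i j k l hkl
    rcases lt_trichotomy j k with hjk | rfl | hjk
    · exact s1 i j k l hjk hkl
    · exact z23 _ _ _
    rw [h23, neg_eq_zero]
    rcases lt_trichotomy j l with hjl | rfl | hjl
    · exact s1 i k j l hjk hjl
    · exact z34 _ _ _
    rw [h34, neg_eq_zero]
    exact s1 i k l j hkl hjl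
  rcases lt_trichotomy k l with hkl | rfl | hkl
  · exact s2 i j k l hkl
  · exact z34 _ _ _
  · rw [h34, neg_eq_zero]
    exact s2 i j l k hkl

theorem mem_Wstab_of_sorted (X : Matrix (Fin 8) (Fin 8) ℝ)
    (h : ∀ i j k l, i < j → j < k → k < l → act X i j k l = 0) : X ∈ Wstab := by
  have hX : ∀ i j k l, actPhi X i j k l = ∑ s, (X i s * Phi s j k l + X j s * Phi i s k l
    + X k s * Phi i j s l + X l s * Phi i j k s) := fun _ _ _ _ => rfl
  rw [Wstab, LinearMap.mem_ker]
  funext i j k l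
  refine alt_zero (actPhi X) ?_ ?_ ?_ ?_ i j k l
  · intro i j k l
    rw [hX, hX, ← Finset.sum_neg_distrib]
    refine Finset.sum_congr rfl fun s _ => ?_
    rw [Phi_swap12 j s, Phi_swap12 s i, Phi_swap12 j i, Phi_swap12 j i]
    ring
  · intro i j k l
    rw [hX, hX, ← Finset.sum_neg_distrib]
    refine Finset.sum_congr rfl fun s _ => ?_
    rw [Phi_swap23 s k j, Phi_swap23 i s j, Phi_swap23 i k s, Phi_swap23 i k j]
    ring
  · intro i j k l
    rw [hX, hX, ← Finset.sum_neg_distrib]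
    refine Finset.sum_congr rfl fun s _ => ?_
    rw [Phi_swap34 s j l k, Phi_swap34 i s l k, Phi_swap34 i j s k, Phi_swap34 i j l s]
    ring
  · intro i j k l h1 h2 h3
    rw [actPhi_eq, h i j k l h1 h2 h3]

theorem diag_zero (X : Matrix (Fin 8) (Fin 8) ℝ) (h : ∀ i j k l, act X i j k l = 0) (i : Fin 8) :
    X i i = 0 := by
  have d0 : -X 0 0 - X 1 1 + (-X 2 2) - X 7 7 = 0 :=
    h 0 1 2 7
  have d1 : -X 0 0 - X 1 1 + (-X 3 3) - X 5 5 = 0 :=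
    h 0 1 3 5
  have d2 : X 0 0 - (-X 1 1) + X 4 4 - (-X 6 6) = 0 :=
    h 0 1 4 6
  have d3 : X 0 0 - (-X 2 2) + X 3 3 - (-X 6 6) = 0 :=
    h 0 2 3 6
  have d4 : X 0 0 - (-X 2 2) + X 4 4 - (-X 5 5) = 0 :=
    h 0 2 4 5
  have d5 : -X 0 0 - X 3 3 + (-X 4 4) - X 7 7 = 0 :=
    h 0 3 4 7
  have d6 : -X 0 0 - X 5 5 + (-X 6 6) - X 7 7 = 0 :=
    h 0 5 6 7
  have d7 : -X 1 1 - X 2 2 + (-X 3 3) - X 4 4 = 0 :=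
    h 1 2 3 4
  have d8 : -X 1 1 - X 2 2 + (-X 5 5) - X 6 6 = 0 :=
    h 1 2 5 6
  have d9 : -X 1 1 - X 3 3 + (-X 6 6) - X 7 7 = 0 :=
    h 1 3 6 7
  have d10 : -X 1 1 - X 4 4 + (-X 5 5) - X 7 7 = 0 :=
    h 1 4 5 7
  have d11 : -X 2 2 - X 3 3 + (-X 5 5) - X 7 7 = 0 :=
    h 2 3 5 7
  have d12 : X 2 2 - (-X 4 4) + X 6 6 - (-X 7 7) = 0 :=
    h 2 4 6 7
  have d13 : -X 3 3 - X 4 4 + (-X 5 5) - X 6 6 = 0 :=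
    h 3 4 5 6
  fin_cases i <;> simp only [Fin.reduceFinMk, Fin.zero_eta, Fin.mk_one] <;> linarith

theorem group_4 (X : Matrix (Fin 8) (Fin 8) ℝ) (h : ∀ i j k l, act X i j k l = 0) :
    (X 4 0 = -X 0 4 ∧ X 6 1 = -X 1 6 ∧ X 5 2 = -X 2 5 ∧ X 7 3 = -X 3 7) ∧
      X 0 4 = -X 1 6 - X 2 5 + X 3 7 := by
  have e0 : X 0 4 - (-X 1 6) + X 2 5 - X 3 7 = 0 :=
    h 0 1 2 3
  have e1 : X 0 4 - (-X 1 6) + (-X 5 2) - (-X 7 3) = 0 :=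
    h 0 1 5 7
  have e2 : -X 0 4 - X 2 5 + X 6 1 - X 7 3 = 0 :=
    h 0 2 6 7
  have e3 : X 0 4 - X 3 7 + (-X 5 2) - X 6 1 = 0 :=
    h 0 3 5 6
  have e4 : X 1 6 - (-X 2 5) + (-X 4 0) - (-X 7 3) = 0 :=
    h 1 2 4 7
  have e5 : X 1 6 - X 3 7 + (-X 4 0) - X 5 2 = 0 :=
    h 1 3 4 5
  have e6 : -X 2 5 - (-X 3 7) + X 4 0 - (-X 6 1) = 0 :=
    h 2 3 4 6
  have e7 : -X 4 0 - X 5 2 + (-X 6 1) - (-X 7 3) = 0 :=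
    h 4 5 6 7
  refine ⟨⟨?_, ?_, ?_, ?_⟩, ?_⟩ <;> linarith

theorem group_3 (X : Matrix (Fin 8) (Fin 8) ℝ) (h : ∀ i j k l, act X i j k l = 0) :
    (X 3 0 = -X 0 3 ∧ X 5 1 = -X 1 5 ∧ X 6 2 = -X 2 6 ∧ X 7 4 = -X 4 7) ∧
      X 0 3 = X 1 5 - X 2 6 - X 4 7 := by
  have e0 : -X 0 3 - (-X 1 5) + (-X 2 6) - X 4 7 = 0 :=
    h 0 1 2 4
  have e1 : X 0 3 - X 1 5 + (-X 6 2) - X 7 4 = 0 :=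
    h 0 1 6 7
  have e2 : X 0 3 - (-X 2 6) + X 5 1 - X 7 4 = 0 :=
    h 0 2 5 7
  have e3 : -X 0 3 - X 4 7 + (-X 5 1) - (-X 6 2) = 0 :=
    h 0 4 5 6
  have e4 : -X 1 5 - (-X 2 6) + (-X 3 0) - X 7 4 = 0 :=
    h 1 2 3 7
  have e5 : -X 1 5 - X 3 0 + X 4 7 - X 6 2 = 0 :=
    h 1 3 4 6
  have e6 : X 2 6 - X 3 0 + X 4 7 - (-X 5 1) = 0 :=
    h 2 3 4 5
  have e7 : -X 3 0 - (-X 5 1) + (-X 6 2) - X 7 4 = 0 :=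
    h 3 5 6 7
  refine ⟨⟨?_, ?_, ?_, ?_⟩, ?_⟩ <;> linarith

theorem group_6 (X : Matrix (Fin 8) (Fin 8) ℝ) (h : ∀ i j k l, act X i j k l = 0) :
    (X 6 0 = -X 0 6 ∧ X 4 1 = -X 1 4 ∧ X 3 2 = -X 2 3 ∧ X 7 5 = -X 5 7) ∧
      X 0 6 = X 1 4 + X 2 3 + X 5 7 := by
  have e0 : X 0 6 - X 1 4 + (-X 2 3) - X 5 7 = 0 :=
    h 0 1 2 5
  have e1 : -X 0 6 - (-X 1 4) + (-X 3 2) - X 7 5 = 0 :=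
    h 0 1 3 7
  have e2 : X 0 6 - X 2 3 + X 4 1 - (-X 7 5) = 0 :=
    h 0 2 4 7
  have e3 : X 0 6 - (-X 3 2) + X 4 1 - X 5 7 = 0 :=
    h 0 3 4 5
  have e4 : -X 1 4 - X 2 3 + (-X 6 0) - (-X 7 5) = 0 :=
    h 1 2 6 7
  have e5 : X 1 4 - X 3 2 + X 5 7 - (-X 6 0) = 0 :=
    h 1 3 5 6
  have e6 : -X 2 3 - (-X 4 1) + (-X 5 7) - X 6 0 = 0 :=
    h 2 4 5 6
  have e7 : X 3 2 - (-X 4 1) + (-X 6 0) - (-X 7 5) = 0 :=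
    h 3 4 6 7
  refine ⟨⟨?_, ?_, ?_, ?_⟩, ?_⟩ <;> linarith

theorem group_5 (X : Matrix (Fin 8) (Fin 8) ℝ) (h : ∀ i j k l, act X i j k l = 0) :
    (X 5 0 = -X 0 5 ∧ X 3 1 = -X 1 3 ∧ X 4 2 = -X 2 4 ∧ X 7 6 = -X 6 7) ∧
      X 0 5 = -X 1 3 + X 2 4 - X 6 7 := by
  have e0 : -X 0 5 - X 1 3 + X 2 4 - X 6 7 = 0 :=
    h 0 1 2 6
  have e1 : -X 0 5 - X 1 3 + (-X 4 2) - (-X 7 6) = 0 :=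
    h 0 1 4 7
  have e2 : -X 0 5 - (-X 2 4) + X 3 1 - (-X 7 6) = 0 :=
    h 0 2 3 7
  have e3 : -X 0 5 - (-X 3 1) + (-X 4 2) - X 6 7 = 0 :=
    h 0 3 4 6
  have e4 : X 1 3 - X 2 4 + (-X 5 0) - X 7 6 = 0 :=
    h 1 2 5 7
  have e5 : -X 1 3 - X 4 2 + X 5 0 - X 6 7 = 0 :=
    h 1 4 5 6
  have e6 : X 2 4 - (-X 3 1) + X 5 0 - X 6 7 = 0 :=
    h 2 3 5 6
  have e7 : -X 3 1 - (-X 4 2) + (-X 5 0) - X 7 6 = 0 :=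
    h 3 4 5 7
  refine ⟨⟨?_, ?_, ?_, ?_⟩, ?_⟩ <;> linarith

theorem group_2 (X : Matrix (Fin 8) (Fin 8) ℝ) (h : ∀ i j k l, act X i j k l = 0) :
    (X 2 0 = -X 0 2 ∧ X 7 1 = -X 1 7 ∧ X 6 3 = -X 3 6 ∧ X 5 4 = -X 4 5) ∧
      X 0 2 = X 1 7 + X 3 6 + X 4 5 := by
  have e0 : X 0 2 - X 1 7 + (-X 3 6) - X 4 5 = 0 :=
    h 0 1 3 4
  have e1 : X 0 2 - X 1 7 + X 5 4 - (-X 6 3) = 0 :=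
    h 0 1 5 6
  have e2 : -X 0 2 - (-X 3 6) + (-X 5 4) - X 7 1 = 0 :=
    h 0 3 5 7
  have e3 : X 0 2 - X 4 5 + X 6 3 - (-X 7 1) = 0 :=
    h 0 4 6 7
  have e4 : X 1 7 - (-X 2 0) + X 3 6 - X 5 4 = 0 :=
    h 1 2 3 5
  have e5 : -X 1 7 - X 2 0 + (-X 4 5) - (-X 6 3) = 0 :=
    h 1 2 4 6
  have e6 : -X 2 0 - X 3 6 + (-X 4 5) - (-X 7 1) = 0 :=
    h 2 3 4 7
  have e7 : -X 2 0 - (-X 5 4) + X 6 3 - (-X 7 1) = 0 :=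
    h 2 5 6 7
  refine ⟨⟨?_, ?_, ?_, ?_⟩, ?_⟩ <;> linarith

theorem group_7 (X : Matrix (Fin 8) (Fin 8) ℝ) (h : ∀ i j k l, act X i j k l = 0) :
    (X 7 0 = -X 0 7 ∧ X 2 1 = -X 1 2 ∧ X 4 3 = -X 3 4 ∧ X 6 5 = -X 5 6) ∧
      X 0 7 = -X 1 2 - X 3 4 - X 5 6 := by
  have e0 : X 0 7 - (-X 1 2) + X 3 4 - X 6 5 = 0 :=
    h 0 1 3 6
  have e1 : X 0 7 - (-X 1 2) + (-X 4 3) - (-X 5 6) = 0 :=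
    h 0 1 4 5
  have e2 : X 0 7 - X 2 1 + X 3 4 - (-X 5 6) = 0 :=
    h 0 2 3 5
  have e3 : -X 0 7 - (-X 2 1) + X 4 3 - (-X 6 5) = 0 :=
    h 0 2 4 6
  have e4 : -X 1 2 - X 3 4 + (-X 5 6) - (-X 7 0) = 0 :=
    h 1 3 5 7
  have e5 : X 1 2 - X 4 3 + (-X 6 5) - X 7 0 = 0 :=
    h 1 4 6 7
  have e6 : -X 2 1 - (-X 3 4) + (-X 6 5) - X 7 0 = 0 :=
    h 2 3 6 7
  have e7 : -X 2 1 - X 4 3 + X 5 6 - X 7 0 = 0 :=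
    h 2 4 5 7
  refine ⟨⟨?_, ?_, ?_, ?_⟩, ?_⟩ <;> linarith

theorem group_1 (X : Matrix (Fin 8) (Fin 8) ℝ) (h : ∀ i j k l, act X i j k l = 0) :
    (X 1 0 = -X 0 1 ∧ X 7 2 = -X 2 7 ∧ X 5 3 = -X 3 5 ∧ X 6 4 = -X 4 6) ∧
      X 0 1 = -X 2 7 - X 3 5 + X 4 6 := by
  have e0 : -X 0 1 - X 2 7 + (-X 3 5) - (-X 4 6) = 0 :=
    h 0 2 3 4
  have e1 : -X 0 1 - X 2 7 + X 5 3 - X 6 4 = 0 :=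
    h 0 2 5 6
  have e2 : -X 0 1 - X 3 5 + (-X 6 4) - (-X 7 2) = 0 :=
    h 0 3 6 7
  have e3 : -X 0 1 - (-X 4 6) + X 5 3 - (-X 7 2) = 0 :=
    h 0 4 5 7
  have e4 : X 1 0 - X 2 7 + (-X 3 5) - X 6 4 = 0 :=
    h 1 2 3 6
  have e5 : X 1 0 - X 2 7 + X 4 6 - (-X 5 3) = 0 :=
    h 1 2 4 5
  have e6 : -X 1 0 - (-X 3 5) + (-X 4 6) - X 7 2 = 0 :=
    h 1 3 4 7
  have e7 : -X 1 0 - X 5 3 + X 6 4 - X 7 2 = 0 :=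
    h 1 5 6 7
  refine ⟨⟨?_, ?_, ?_, ?_⟩, ?_⟩ <;> linarith

theorem antisymm_of_act (X : Matrix (Fin 8) (Fin 8) ℝ) (h : ∀ i j k l, act X i j k l = 0)
    (i j : Fin 8) : X i j = -X j i := by
  have hd := diag_zero X h
  obtain ⟨⟨a04, a16, a25, a37⟩, -⟩ := group_4 X h
  obtain ⟨⟨a03, a15, a26, a47⟩, -⟩ := group_3 X h
  obtain ⟨⟨a06, a14, a23, a57⟩, -⟩ := group_6 X h
  obtain ⟨⟨a05, a13, a24, a67⟩, -⟩ := group_5 X h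
  obtain ⟨⟨a02, a17, a36, a45⟩, -⟩ := group_2 X h
  obtain ⟨⟨a07, a12, a34, a56⟩, -⟩ := group_7 X h
  obtain ⟨⟨a01, a27, a35, a46⟩, -⟩ := group_1 X h
  have hlt : ∀ i j : Fin 8, i < j → X j i = -X i j := by
    intro i j hij
    fin_cases i <;> fin_cases j <;> first | (exact absurd hij (by decide)) | assumption
  rcases lt_trichotomy i j with hij | hij | hij
  · rw [hlt i j hij, neg_neg]
  · subst hij
    rw [hd i, neg_zero]
  · exact hlt j i hij

/-- Index set of the free entries: pairs `1 ≤ a < b ≤ 7`. -/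
abbrev Idx : Type := {q : Fin 8 × Fin 8 // 0 < q.1 ∧ q.1 < q.2}

theorem card_Idx : Fintype.card Idx = 21 := by
  decide +kernel

theorem eq_zero_of_act (X : Matrix (Fin 8) (Fin 8) ℝ) (h : ∀ i j k l, act X i j k l = 0)
    (h0 : ∀ q : Idx, X q.1.1 q.1.2 = 0) : X = 0 := by
  have hz : ∀ a b : Fin 8, 0 < a → a < b → X a b = 0 := fun a b h1 h2 => h0 ⟨(a, b), h1, h2⟩
  have hc : ∀ c : Fin 8, 0 < c → X 0 c = 0 := by
    intro c hc
    fin_cases c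
    · exact absurd hc (by decide)
    · refine (group_1 X h).2.trans ?_
      rw [hz 2 7 (by decide) (by decide), hz 3 5 (by decide) (by decide), hz 4 6 (by decide) (by decide)]
      norm_num
    · refine (group_2 X h).2.trans ?_
      rw [hz 1 7 (by decide) (by decide), hz 3 6 (by decide) (by decide), hz 4 5 (by decide) (by decide)]
      norm_num
    · refine (group_3 X h).2.trans ?_
      rw [hz 1 5 (by decide) (by decide), hz 2 6 (by decide) (by decide), hz 4 7 (by decide) (by decide)]
      norm_num
    · refine (group_4 X h).2.trans ?_
      rw [hz 1 6 (by decide) (by decide), hz 2 5 (by decide) (by decide), hz 3 7 (by decide) (by decide)]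
      norm_num
    · refine (group_5 X h).2.trans ?_
      rw [hz 1 3 (by decide) (by decide), hz 2 4 (by decide) (by decide), hz 6 7 (by decide) (by decide)]
      norm_num
    · refine (group_6 X h).2.trans ?_
      rw [hz 1 4 (by decide) (by decide), hz 2 3 (by decide) (by decide), hz 5 7 (by decide) (by decide)]
      norm_num
    · refine (group_7 X h).2.trans ?_
      rw [hz 1 2 (by decide) (by decide), hz 3 4 (by decide) (by decide), hz 5 6 (by decide) (by decide)]
      norm_num
  have hlt : ∀ a b : Fin 8, a < b → X a b = 0 := by
    intro a b hab
    rcases eq_or_ne a 0 with ha | ha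
    · subst ha
      exact hc b hab
    · exact hz a b (Fin.pos_iff_ne_zero.mpr ha) hab
  ext a b
  rcases lt_trichotomy a b with hab | hab | hab
  · exact hlt a b hab
  · subst hab
    exact diag_zero X h a
  · rw [antisymm_of_act X h a b, hlt b a hab, neg_zero]
    rfl

/-- The integral generator of the stabilizer attached to the pair `q`. -/
def gen (q : Idx) (i j : Fin 8) : ℤ :=
  (if i = q.1.1 then (if j = q.1.2 then 1 else 0) else 0)
    - (if i = q.1.2 then (if j = q.1.1 then 1 else 0) else 0)
    + (if i = 0 ∨ j = 0 then
        (if i = cp j q.1.1 q.1.2 then signed (crossCode j q.1.1 q.1.2 / 8) 1 else 0) else 0)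

set_option maxRecDepth 100000 in
theorem act_gen : ∀ (q : Idx) (i j k l : Fin 8), i < j → j < k → k < l →
    act (gen q) i j k l = 0 := by
  decide +kernel

theorem gen_apply : ∀ q r : Idx, gen q r.1.1 r.1.2 = if q = r then 1 else 0 := by
  decide +kernel

theorem sterm_cast (v : Fin 8 → ℤ) (j k l : Fin 8) :
    sterm (fun s => (v s : ℝ)) j k l = ((sterm v j k l : ℤ) : ℝ) := by
  unfold sterm signed
  split <;> simp

/-- The generator as a real matrix. -/
def genR (q : Idx) : Matrix (Fin 8) (Fin 8) ℝ := fun i j => (gen q i j : ℝ)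

theorem genR_mem (q : Idx) : genR q ∈ Wstab := by
  refine mem_Wstab_of_sorted _ fun i j k l h1 h2 h3 => ?_
  have h := act_gen q i j k l h1 h2 h3
  have h' : ((act (gen q) i j k l : ℤ) : ℝ) = 0 := by rw [h]; simp
  rw [← h']
  simp only [act, Int.cast_add, Int.cast_sub, ← sterm_cast]
  rfl

/-- The restriction of a stabilizing matrix to its free entries. -/
def entries : Wstab →ₗ[ℝ] (Idx → ℝ) where
  toFun X := fun q => X.1 q.1.1 q.1.2
  map_add' _ _ := rfl
  map_smul' _ _ := rfl

theorem entries_injective : Function.Injective entries := by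
  rw [injective_iff_map_eq_zero]
  intro X hX
  apply Subtype.ext
  exact eq_zero_of_act X.1 ((mem_Wstab X.1).1 X.2) (fun q => congrFun hX q)

theorem entries_surjective : Function.Surjective entries := by
  intro p
  refine ⟨∑ q, p q • (⟨genR q, genR_mem q⟩ : Wstab), ?_⟩
  rw [map_sum]
  funext r
  have h : ∀ q, entries (⟨genR q, genR_mem q⟩ : Wstab) r = if q = r then 1 else 0 := by
    intro q
    change ((gen q r.1.1 r.1.2 : ℤ) : ℝ) = _
    rw [gen_apply]
    split_ifs <;> simp
  simp only [map_smul, Finset.sum_apply, Pi.smul_apply, h, smul_eq_mul, mul_ite, mul_one, mul_zero,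
    Finset.sum_ite_eq', Finset.mem_univ, if_true]

/-- Every matrix in the infinitesimal stabilizer of `Φ` is antisymmetric, and the
stabilizer (the Lie algebra `spin(7) ⊂ so(8)`) has dimension 21. -/
theorem spin7_stabilizer_antisymmetric_dim_21 :
    (∀ X ∈ Wstab, ∀ i j, X i j = -X j i) ∧ Module.finrank ℝ ↥Wstab = 21 := by
  refine ⟨fun X hX => antisymm_of_act X ((mem_Wstab X).1 hX), ?_⟩
  rw [(LinearEquiv.ofBijective entries ⟨entries_injective, entries_surjective⟩).finrank_eq,
    Module.finrank_fintype_fun_eq_card, card_Idx]
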